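/- arXiv:2010.03718 — 2 statements merged into one kernel-verified Lean document; each statement's English description precedes it below -/
import Mathlib

section
/- Let A be a type and let ℓ₀, ℓ : A → ℝ be functions such that ℓ₀(a) > 0 for all a, every sublevel set {a ∈ A | ℓ₀(a) ≤ T} is finite, and the exponential growth rate of ℓ₀ equals 1. Suppose there exist B ≥ 1 and s > 0 such that (s/B)·ℓ₀(a) ≤ ℓ(a) ≤ B·s·ℓ₀(a) for every a ∈ A. Then every sublevel set of ℓ is finite, the exponential growth rate h(ℓ) of ℓ (taken as a limit superior of real numbers) satisfies 1/(B·s) ≤ h(ℓ) ≤ B/s, and consequently the renormalized function h(ℓ)·ℓ satisfies (1/B²)·ℓ₀(a) ≤ h(ℓ)·ℓ(a) ≤ B²·ℓ₀(a) for every a ∈ A. -/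
/-- The exponential growth rate of a length function `ℓ : A → ℝ`:
`h(ℓ) = limsup_{T→∞} (1/T) · log #{a ∈ A | ℓ(a) ≤ T}`, taken as a limit superior
of real numbers. -/
noncomputable def growthRate {A : Type*} (ℓ : A → ℝ) : ℝ :=
  Filter.limsup (fun T : ℝ => Real.log (Nat.card {a : A // ℓ a ≤ T}) / T) Filter.atTop

/-- Transfer of eventual upper bounds: if `f ≤ c * g` pointwise, with `c > 0`, then an eventual bound
`x` on the growth of `f` gives the eventual bound `c * x` for `g`. -/
theorem growth_transfer {A : Type*} (f g : A → ℝ) (c : ℝ) (hc : 0 < c)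
    (hfin : ∀ T : ℝ, {a : A | f a ≤ T}.Finite) (h : ∀ a, f a ≤ c * g a) (x : ℝ)
    (hx : ∀ᶠ T : ℝ in Filter.atTop, Real.log (Nat.card {a : A // f a ≤ T}) / T ≤ x) :
    ∀ᶠ T : ℝ in Filter.atTop, Real.log (Nat.card {a : A // g a ≤ T}) / T ≤ c * x := by
  have ht : Filter.Tendsto (fun T : ℝ => c * T) Filter.atTop Filter.atTop :=
    Filter.tendsto_id.const_mul_atTop hc
  filter_upwards [ht.eventually hx, Filter.eventually_gt_atTop 0] with T h1 h2
  have hcT : 0 < c * T := mul_pos hc h2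
  rw [div_le_iff₀ hcT] at h1
  rw [div_le_iff₀ h2]
  have hcard : Nat.card {a : A // g a ≤ T} ≤ Nat.card {a : A // f a ≤ c * T} :=
    Nat.card_mono (hfin (c * T)) (fun a (ha : g a ≤ T) =>
      (h a).trans (mul_le_mul_of_nonneg_left ha hc.le))
  have hlog : Real.log (Nat.card {a : A // g a ≤ T})
      ≤ Real.log (Nat.card {a : A // f a ≤ c * T}) := by
    rcases Nat.eq_zero_or_pos (Nat.card {a : A // g a ≤ T}) with h0 | h0
    · rw [h0]
      simpa using Real.log_natCast_nonneg _
    · exact Real.log_le_log (by exact_mod_cast h0) (by exact_mod_cast hcard)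
  linarith

theorem growth_bddBelow {A : Type*} (f : A → ℝ) :
    BddBelow {x : ℝ | ∀ᶠ T : ℝ in Filter.atTop,
      Real.log (Nat.card {a : A // f a ≤ T}) / T ≤ x} := by
  refine ⟨0, fun x hx => ?_⟩
  obtain ⟨T, h1, h2⟩ := (Filter.Eventually.and hx (Filter.eventually_gt_atTop (0 : ℝ))).exists
  exact (div_nonneg (Real.log_natCast_nonneg _) h2.le).trans h1

theorem renormalized_length_biLipschitz {A : Type*} (ℓ₀ ℓ : A → ℝ)
    (hpos : ∀ a, 0 < ℓ₀ a)
    (hfin₀ : ∀ T : ℝ, {a : A | ℓ₀ a ≤ T}.Finite)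
    (hgr₀ : growthRate ℓ₀ = 1)
    (B s : ℝ) (hB : 1 ≤ B) (hs : 0 < s)
    (hlow : ∀ a, (s / B) * ℓ₀ a ≤ ℓ a)
    (hup : ∀ a, ℓ a ≤ B * s * ℓ₀ a) :
    (∀ T : ℝ, {a : A | ℓ a ≤ T}.Finite) ∧
    (1 / (B * s) ≤ growthRate ℓ ∧ growthRate ℓ ≤ B / s) ∧
    (∀ a, (1 / B ^ 2) * ℓ₀ a ≤ growthRate ℓ * ℓ a ∧
      growthRate ℓ * ℓ a ≤ B ^ 2 * ℓ₀ a) := by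
  have hB0 : 0 < B := by linarith
  have hBs : 0 < B * s := mul_pos hB0 hs
  have hsB : 0 < B / s := div_pos hB0 hs
  have hlow' : ∀ a, ℓ₀ a ≤ B / s * ℓ a := fun a => by
    have := mul_le_mul_of_nonneg_left (hlow a) hsB.le
    have e : B / s * (s / B * ℓ₀ a) = ℓ₀ a := by field_simp
    linarith
  have hfin : ∀ T : ℝ, {a : A | ℓ a ≤ T}.Finite := fun T =>
    (hfin₀ (B / s * T)).subset (fun a (ha : ℓ a ≤ T) =>
      (hlow' a).trans (mul_le_mul_of_nonneg_left ha hsB.le))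
  have hb₀ := growth_bddBelow ℓ₀
  have hb := growth_bddBelow ℓ
  have ht := growth_transfer ℓ₀ ℓ (B / s) hsB hfin₀ hlow'
  have ht' := growth_transfer ℓ ℓ₀ (B * s) hBs hfin hup
  have hg : growthRate ℓ = sInf {x : ℝ | ∀ᶠ T : ℝ in Filter.atTop,
      Real.log (Nat.card {a : A // ℓ a ≤ T}) / T ≤ x} := Filter.limsup_eq
  have hg₀ : sInf {x : ℝ | ∀ᶠ T : ℝ in Filter.atTop,
      Real.log (Nat.card {a : A // ℓ₀ a ≤ T}) / T ≤ x} = 1 := by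
    rw [← hgr₀]; exact Filter.limsup_eq.symm
  have hne : {x : ℝ | ∀ᶠ T : ℝ in Filter.atTop,
      Real.log (Nat.card {a : A // ℓ₀ a ≤ T}) / T ≤ x}.Nonempty := by
    rw [Set.nonempty_iff_ne_empty]
    intro h
    rw [h, Real.sInf_empty] at hg₀
    exact zero_ne_one hg₀
  have h1 : 1 / (B * s) ≤ growthRate ℓ := by
    rw [hg]
    obtain ⟨x, hx⟩ := hne
    refine le_csInf ⟨_, ht x hx⟩ (fun y hy => ?_)
    have := csInf_le hb₀ (ht' y hy)
    rw [hg₀] at this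
    rw [div_le_iff₀ hBs]
    linarith
  have h2 : growthRate ℓ ≤ B / s := by
    have : growthRate ℓ / (B / s) ≤ 1 := by
      rw [← hg₀]
      refine le_csInf hne (fun y hy => ?_)
      rw [div_le_iff₀ hsB, mul_comm, hg]
      exact csInf_le hb (ht y hy)
    rwa [div_le_one hsB] at this
  refine ⟨hfin, ⟨h1, h2⟩, fun a => ?_⟩
  have hl0 : 0 < s / B * ℓ₀ a := mul_pos (div_pos hs hB0) (hpos a)
  constructor
  · calc 1 / B ^ 2 * ℓ₀ a = 1 / (B * s) * (s / B * ℓ₀ a) := by field_simp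
      _ ≤ growthRate ℓ * ℓ a :=
        mul_le_mul h1 (hlow a) hl0.le ((one_div_pos.mpr hBs).le.trans h1)
  · calc growthRate ℓ * ℓ a ≤ B / s * (B * s * ℓ₀ a) :=
        mul_le_mul h2 (hup a) (hl0.le.trans (hlow a)) hsB.le
      _ = B ^ 2 * ℓ₀ a := by field_simp
end

section
/- Let X and Y be metric spaces, let (ψ¹_t)_{t≥0} be a family of maps X → X and (ψ²_t)_{t≥0} a family of maps Y → Y, and let h : X → Y and g : Y → X satisfy g ∘ h = id_X and h ∘ ψ¹_t = ψ²_t ∘ h for every t ≥ 0. Fix α₀ ∈ (0,1] and constants C_h, C_g > 0 such that d(h(x), h(x')) ≤ C_h · d(x, x')^{α₀} for all x, x' ∈ X and d(g(y), g(y')) ≤ C_g · d(y, y')^{α₀} for all y, y' ∈ Y. Suppose x, y ∈ X, C₁, λ > 0 and α₁ ∈ (0,1] satisfy d(ψ¹_t(x), ψ¹_t(y)) ≤ C₁ · e^{−λt} · d(x, y)^{α₁} for all t ≥ 0. Then for all t ≥ 0, d(ψ²_t(h(x)), ψ²_t(h(y))) ≤ C₂ · e^{−λ·α₀·t} · d(h(x),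 h(y))^{α₀²·α₁}, where C₂ = C_h · C₁^{α₀} · C_g^{α₀·α₁}. -/
theorem holder_conjugacy_transfers_contraction
    {X Y : Type*} [MetricSpace X] [MetricSpace Y]
    (ψ₁ : ℝ → X → X) (ψ₂ : ℝ → Y → Y) (h : X → Y) (g : Y → X)
    (hgh : ∀ x : X, g (h x) = x)
    (hconj : ∀ t : ℝ, 0 ≤ t → ∀ x : X, h (ψ₁ t x) = ψ₂ t (h x))
    (α₀ : ℝ) (hα₀pos : 0 < α₀) (hα₀le : α₀ ≤ 1)
    (Ch Cg : ℝ) (hCh : 0 < Ch) (hCg : 0 < Cg)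
    (hHoldh : ∀ x x' : X, dist (h x) (h x') ≤ Ch * dist x x' ^ α₀)
    (hHoldg : ∀ y y' : Y, dist (g y) (g y') ≤ Cg * dist y y' ^ α₀)
    (x y : X) (C₁ lam : ℝ) (hC₁ : 0 < C₁) (hlam : 0 < lam)
    (α₁ : ℝ) (hα₁pos : 0 < α₁) (hα₁le : α₁ ≤ 1)
    (hcontr : ∀ t : ℝ, 0 ≤ t →
      dist (ψ₁ t x) (ψ₁ t y) ≤ C₁ * Real.exp (-lam * t) * dist x y ^ α₁) :
    ∀ t : ℝ, 0 ≤ t →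
      dist (ψ₂ t (h x)) (ψ₂ t (h y)) ≤
        (Ch * C₁ ^ α₀ * Cg ^ (α₀ * α₁)) * Real.exp (-(lam * α₀) * t) *
          dist (h x) (h y) ^ (α₀ ^ 2 * α₁) := by
  intro t ht
  have hxy : dist x y ≤ Cg * dist (h x) (h y) ^ α₀ := by
    have := hHoldg (h x) (h y)
    rwa [hgh, hgh] at this
  have hD : 0 ≤ dist (h x) (h y) := dist_nonneg
  have hE : 0 ≤ Real.exp (-lam * t) := (Real.exp_pos _).le
  have h1 : dist (ψ₁ t x) (ψ₁ t y) ≤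
      C₁ * Real.exp (-lam * t) * (Cg * dist (h x) (h y) ^ α₀) ^ α₁ := by
    refine (hcontr t ht).trans ?_
    exact mul_le_mul_of_nonneg_left
      (Real.rpow_le_rpow dist_nonneg hxy hα₁pos.le) (by positivity)
  have h2 := Real.rpow_le_rpow dist_nonneg h1 hα₀pos.le
  have h3 : (C₁ * Real.exp (-lam * t) * (Cg * dist (h x) (h y) ^ α₀) ^ α₁) ^ α₀ =
      C₁ ^ α₀ * Real.exp (-(lam * α₀) * t) *
        (Cg ^ (α₀ * α₁) * dist (h x) (h y) ^ (α₀ ^ 2 * α₁)) := by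
    rw [Real.mul_rpow (by positivity) (by positivity), Real.mul_rpow hC₁.le hE,
      ← Real.exp_mul, ← Real.rpow_mul (by positivity),
      Real.mul_rpow hCg.le (by positivity), ← Real.rpow_mul hD]
    ring_nf
  rw [← hconj t ht, ← hconj t ht]
  refine (hHoldh _ _).trans ?_
  refine (mul_le_mul_of_nonneg_left (h2.trans_eq h3) hCh.le).trans_eq ?_
  ring
end
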